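/- arXiv:1508.00864 — 3 statements merged into one kernel-verified Lean document; each statement's English description precedes it below -/
import Mathlib

section
/- Let δe, δb be relations on a type α, let S ⊆ R ⊆ α, and suppose R satisfies the termination property for δe, δb. Let δ''p be any relation on α with δ''p ∩ δb = ∅ and δ''p ∩ δe = ∅, and suppose every state of α has an outgoing transition in δ''p ∪ δe. Then for every s₀ ∉ R there exists an infinite p''[]₂δe computation σ with σ 0 = s₀ such that σ i ∉ S for all i. -/
variable {α : Type*}

/-- `Rp δb R` is the set of states outside `R` from which some state of `R`
can be reached by a transition not in `δb`. -/
def Rp (δb : Set (α × α)) (R : Set α) : Set α :=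
  {s | s ∉ R ∧ ∃ t ∈ R, (s, t) ∉ δb}

/-- The termination property of the fixed-point set `R`. -/
def TermProp (δe δb : Set (α × α)) (R : Set α) : Prop :=
  ∀ s ∉ R, (∃ u, u ∉ R ∪ Rp δb R ∧ (s, u) ∈ δe) ∨
    ((¬ ∃ t ∈ R ∪ Rp δb R, (s, t) ∈ δe) ∧ s ∉ Rp δb R)

/-- A `p[]₂δe` computation (infinite). -/
def Comp2 (δp δe : Set (α × α)) (σ : ℕ → α) : Prop :=
  (∀ i, (σ i, σ (i + 1)) ∈ δp ∪ δe) ∧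
  (∀ i, (σ i, σ (i + 1)) ∈ δe → (∃ t, (σ (i + 1), t) ∈ δp) →
    (σ (i + 1), σ (i + 2)) ∈ δp)

/-!
The environment keeps the computation outside `R` by making only moves that end outside
`R ∪ Rp δb R`. After such a move the program is entitled to the next step, but a safe program
cannot enter `R` from outside `Rp δb R`. After a program step the environment is free again, and
the termination property either gives it another such move or makes every move harmless.
-/

theorem exists_seq_of_forall_exists_next {r : α → α → Prop} {q : α → α → α → Prop}
    (next : ∀ s t, r s t → ∃ u, r t u ∧ q s t u) {a b : α} (hab : r a b) :
    ∃ σ : ℕ → α, σ 0 = a ∧ (∀ i, r (σ i) (σ (i + 1))) ∧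
      ∀ i, q (σ i) (σ (i + 1)) (σ (i + 2)) := by
  choose! f hr hq using next
  let edge : ℕ → α × α := Nat.rec (a, b) fun _ e => (e.2, f e.1 e.2)
  have hedge : ∀ i, r (edge i).1 (edge i).2 := by
    intro i
    induction i with
    | zero => exact hab
    | succ i ih => exact hr _ _ ih
  exact ⟨fun i => (edge i).1, rfl, hedge, fun i => hq _ _ (hedge i)⟩

/-- A transition of the program or the environment that ends outside `R`, and outside `Rp δb R` too
if the environment can make it. These are the steps of the computations that avoid `R`: the extra
condition covers the program step that an environment step may force next. -/
structure AvoidingStep (δp δe δb : Set (α × α)) (R : Set α) (s t : α) : Prop where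
  mem_union : (s, t) ∈ δp ∪ δe
  notMem : t ∉ R
  notMem_Rp : (s, t) ∈ δe → t ∉ Rp δb R

section

variable {δp δe δb : Set (α × α)} {R : Set α} {s t : α}

theorem notMem_of_mem_program (hb : Disjoint δp δb) (hs : s ∉ R) (hsRp : s ∉ Rp δb R)
    (hst : (s, t) ∈ δp) : t ∉ R :=
  fun ht => hsRp ⟨hs, t, ht, hb.notMem_of_mem_left hst⟩

theorem AvoidingStep.of_mem_program (hb : Disjoint δp δb) (he : Disjoint δp δe) (hs : s ∉ R)
    (hsRp : s ∉ Rp δb R) (hst : (s, t) ∈ δp) : AvoidingStep δp δe δb R s t where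
  mem_union := Or.inl hst
  notMem := notMem_of_mem_program hb hs hsRp hst
  notMem_Rp hst' := absurd hst' (he.notMem_of_mem_left hst)

theorem AvoidingStep.of_mem_env (hst : (s, t) ∈ δe) (ht : t ∉ R ∪ Rp δb R) :
    AvoidingStep δp δe δb R s t where
  mem_union := Or.inr hst
  notMem := fun h => ht (Or.inl h)
  notMem_Rp _ := fun h => ht (Or.inr h)

theorem TermProp.exists_avoidingStep (hR : TermProp δe δb R) (hb : Disjoint δp δb)
    (hs : s ∉ R) (hlive : ∃ t, (s, t) ∈ δp ∪ δe) : ∃ t, AvoidingStep δp δe δb R s t := by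
  rcases hR s hs with ⟨u, hu, hsu⟩ | ⟨henv, hsRp⟩
  · exact ⟨u, .of_mem_env hsu hu⟩
  · obtain ⟨t, hst | hst⟩ := hlive
    · exact ⟨t, Or.inl hst, notMem_of_mem_program hb hs hsRp hst,
        fun hst' ht => henv ⟨t, Or.inr ht, hst'⟩⟩
    · exact ⟨t, .of_mem_env hst fun ht => henv ⟨t, ht, hst⟩⟩

theorem AvoidingStep.exists_next (hst : AvoidingStep δp δe δb R s t) (hR : TermProp δe δb R)
    (hb : Disjoint δp δb) (he : Disjoint δp δe) (hlive : ∃ u, (t, u) ∈ δp ∪ δe) :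
    ∃ u, AvoidingStep δp δe δb R t u ∧
      ((s, t) ∈ δe → (∃ v, (t, v) ∈ δp) → (t, u) ∈ δp) := by
  by_cases hforced : (s, t) ∈ δe ∧ ∃ v, (t, v) ∈ δp
  · obtain ⟨henv, v, htv⟩ := hforced
    exact ⟨v, .of_mem_program hb he hst.notMem (hst.notMem_Rp henv) htv, fun _ _ => htv⟩
  · obtain ⟨u, htu⟩ := hR.exists_avoidingStep hb hst.notMem hlive
    exact ⟨u, htu, fun henv hprog => absurd ⟨henv, hprog⟩ hforced⟩

theorem TermProp.exists_comp2_forall_notMem (hR : TermProp δe δb R) (hb : Disjoint δp δb)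
    (he : Disjoint δp δe) (hlive : ∀ s ∉ R, ∃ t, (s, t) ∈ δp ∪ δe) (hs : s ∉ R) :
    ∃ σ : ℕ → α, σ 0 = s ∧ Comp2 δp δe σ ∧ ∀ i, σ i ∉ R := by
  obtain ⟨t, hst⟩ := hR.exists_avoidingStep hb hs (hlive s hs)
  obtain ⟨σ, hσ₀, hstep, hfair⟩ := exists_seq_of_forall_exists_next
    (fun _ v huv => AvoidingStep.exists_next huv hR hb he (hlive v huv.notMem)) hst
  refine ⟨σ, hσ₀, ⟨fun i => (hstep i).mem_union, hfair⟩, fun i => ?_⟩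
  cases i with
  | zero => exact hσ₀ ▸ hs
  | succ i => exact (hstep i).notMem

end

theorem stmt5 (δe δb δ''p : Set (α × α)) (S R : Set α)
    (hSR : S ⊆ R) (hR : TermProp δe δb R)
    (hb : δ''p ∩ δb = ∅) (he : δ''p ∩ δe = ∅)
    (hNoDeadlock : ∀ s : α, ∃ t, (s, t) ∈ δ''p ∪ δe) :
    ∀ s₀ ∉ R, ∃ σ : ℕ → α, σ 0 = s₀ ∧ Comp2 δ''p δe σ ∧ ∀ i, σ i ∉ S := by
  intro s₀ hs₀
  obtain ⟨σ, hσ₀, hcomp, havoid⟩ := hR.exists_comp2_forall_notMem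
    (Set.disjoint_iff_inter_eq_empty.mpr hb) (Set.disjoint_iff_inter_eq_empty.mpr he)
    (fun s _ => hNoDeadlock s) hs₀
  exact ⟨σ, hσ₀, hcomp, fun i hi => havoid i (hSR hi)⟩
end

section
/- Let δe, δb, δr, f be relations on a type α and (ms₁, ms₂) the least pair of subsets of α closed under rules (R1)–(R6). Let δ''p be a relation on α with δ''p ∩ δb = ∅, δ''p ∩ δr = ∅, δ''p ∩ δe = ∅, and f ∩ δe = ∅. Then every p''[]₂δe[]f prefix whose final state lies in ms₁ can be extended (by appending finitely many states) to a p''[]₂δe[]f prefix that contains some step (s_i, s_{i+1}) ∈ δb. -/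
variable {α : Type*}

/-- The closure rules (R1)–(R6) computed by the failsafe fault-tolerance
addition algorithm, for a pair of sets `(ms₁, ms₂)`. -/
def ClosedMS (δe δb δr f : Set (α × α)) (ms₁ ms₂ : Set α) : Prop :=
  -- (R1)
  (∀ s t, (s, t) ∈ f → (s, t) ∈ δb → s ∈ ms₁) ∧
  -- (R2)
  (ms₁ ⊆ ms₂) ∧
  -- (R3)
  (∀ s t, (s, t) ∈ δe → (s, t) ∈ δb → s ∈ ms₂) ∧
  -- (R4)
  (∀ s t, (s, t) ∈ f → t ∈ ms₂ → s ∈ ms₁) ∧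
  -- (R5)
  (∀ s, (∃ t, ((s, t) ∈ δe ∧ t ∈ ms₁) ∨ ((s, t) ∈ δe ∧ (s, t) ∈ δb)) →
    (∀ u, (s, u) ∈ δb ∨ (s, u) ∈ δr ∨ u ∈ ms₂) → s ∈ ms₁) ∧
  -- (R6)
  (∀ s t, (s, t) ∈ δe → t ∈ ms₁ → s ∈ ms₂)

/-- `(ms₁, ms₂)` is the least pair of sets closed under rules (R1)–(R6). -/
def LeastMS (δe δb δr f : Set (α × α)) (ms₁ ms₂ : Set α) : Prop :=
  ClosedMS δe δb δr f ms₁ ms₂ ∧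
  ∀ ms₁' ms₂', ClosedMS δe δb δr f ms₁' ms₂' → ms₁ ⊆ ms₁' ∧ ms₂ ⊆ ms₂'

/-- `PrefixF δp δe f σ n`: the finite sequence `σ 0, …, σ n` is a `p[]₂δe[]f` prefix. -/
def PrefixF (δp δe f : Set (α × α)) (σ : ℕ → α) (n : ℕ) : Prop :=
  (∀ i < n, (σ i, σ (i + 1)) ∈ δp ∪ δe ∪ f) ∧
  (∀ i, i + 2 ≤ n → (σ i, σ (i + 1)) ∈ δe → (∃ t, (σ (i + 1), t) ∈ δp) →
    (σ (i + 1), σ (i + 2)) ∈ δp ∪ f)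

/-! Call a state doomed if every prefix ending there can be extended to a violation of `δb`, and
environment-doomed if this holds for those prefixes after which the environment may move. The
pair (doomed states, environment-doomed states) is closed under (R1)–(R6), hence contains the least
such pair. A program or fault step is not an environment step, so after it the environment
may move: this is why (R4) and (R5) may continue from states that are only environment-doomed. -/

/-- After the prefix `σ 0, …, σ n` the environment is allowed to take the next step: either the last
step was not an environment step or the program has no transition from `σ n`. The predecessor
of `n` is quantified so that a one-state prefix satisfies this vacuously. -/
def EnvMayMove (δp δe : Set (α × α)) (σ : ℕ → α) (n : ℕ) : Prop :=
  ∀ k, k + 1 = n → (σ k, σ n) ∈ δe → ¬ ∃ t, (σ n, t) ∈ δp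

/-- The state `t` may be appended to the prefix `σ 0, …, σ n`: program and fault steps are always
possible, environment steps only when `EnvMayMove` holds. -/
def AdmissibleStep (δp δe f : Set (α × α)) (σ : ℕ → α) (n : ℕ) (t : α) : Prop :=
  (σ n, t) ∈ δp ∪ f ∨ (σ n, t) ∈ δe ∧ EnvMayMove δp δe σ n

/-- Some `p[]₂δe[]f` prefix extends `σ 0, …, σ n` and contains a step in `δb`. -/
def ViolationExtendable (δp δe δb f : Set (α × α)) (σ : ℕ → α) (n : ℕ) : Prop :=
  ∃ (σ' : ℕ → α) (m : ℕ), n ≤ m ∧ (∀ i ≤ n, σ' i = σ i) ∧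
    PrefixF δp δe f σ' m ∧ ∃ i < m, (σ' i, σ' (i + 1)) ∈ δb

/-- The states from which a violation is reachable whatever prefix led there; the semantic
counterpart of `ms₁`. -/
def doomedStates (δp δe δb f : Set (α × α)) : Set α :=
  {s | ∀ σ n, PrefixF δp δe f σ n → σ n = s → ViolationExtendable δp δe δb f σ n}

/-- The states from which a violation is reachable whenever the environment may move next; the
semantic counterpart of `ms₂`. -/
def envDoomedStates (δp δe δb f : Set (α × α)) : Set α :=
  {s | ∀ σ n, PrefixF δp δe f σ n → σ n = s → EnvMayMove δp δe σ n →
    ViolationExtendable δp δe δb f σ n}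

section

variable {δp δe δb δr f : Set (α × α)} {σ τ : ℕ → α} {n : ℕ} {s t : α}

theorem update_succ_eq_of_le {i : ℕ} (hi : i ≤ n) : Function.update σ (n + 1) t i = σ i :=
  Function.update_of_ne (by lia) t σ

theorem PrefixF.congr (h : PrefixF δp δe f σ n) (hτ : ∀ i ≤ n, τ i = σ i) :
    PrefixF δp δe f τ n := by
  refine ⟨fun i hi => ?_, fun i hi => ?_⟩
  · rw [hτ i (by lia), hτ (i + 1) (by lia)]
    exact h.1 i hi
  · rw [hτ i (by lia), hτ (i + 1) (by lia), hτ (i + 2) (by lia)]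
    exact h.2 i hi

theorem PrefixF.succ (h : PrefixF δp δe f σ n)
    (hstep : AdmissibleStep δp δe f σ n (σ (n + 1))) : PrefixF δp δe f σ (n + 1) := by
  refine ⟨fun i hi => ?_, fun i hi henv hprog => ?_⟩
  · obtain hlt | rfl := Nat.lt_succ_iff_lt_or_eq.mp hi
    · exact h.1 i hlt
    · obtain (hp | hf) | ⟨he, -⟩ := hstep
      exacts [.inl (.inl hp), .inr hf, .inl (.inr he)]
  · obtain hlast | hlt : n = i + 1 ∨ i + 2 ≤ n := by lia
    · subst hlast
      exact hstep.resolve_right fun hmove => hmove.2 i rfl henv hprog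
    · exact h.2 i hlt henv hprog

theorem AdmissibleStep.congr (h : AdmissibleStep δp δe f σ n t) (hτ : ∀ i ≤ n, τ i = σ i) :
    AdmissibleStep δp δe f τ n t := by
  unfold AdmissibleStep EnvMayMove
  rw [hτ n le_rfl]
  refine h.imp_right (And.imp_right fun hmove k hk => ?_)
  rw [hτ k (by lia)]
  exact hmove k hk

theorem PrefixF.update_succ (h : PrefixF δp δe f σ n) (hstep : AdmissibleStep δp δe f σ n t) :
    PrefixF δp δe f (Function.update σ (n + 1) t) (n + 1) := by
  have hagree : ∀ i ≤ n, Function.update σ (n + 1) t i = σ i := fun _ => update_succ_eq_of_le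
  refine (h.congr hagree).succ ?_
  rw [Function.update_self]
  exact hstep.congr hagree

theorem envMayMove_update_succ (hnot_env : (σ n, t) ∉ δe) :
    EnvMayMove δp δe (Function.update σ (n + 1) t) (n + 1) := by
  intro k hk henv
  obtain rfl : k = n := Nat.succ_injective hk
  rw [update_succ_eq_of_le le_rfl, Function.update_self] at henv
  exact absurd henv hnot_env

theorem ViolationExtendable.of_update_succ
    (h : ViolationExtendable δp δe δb f (Function.update σ (n + 1) t) (n + 1)) :
    ViolationExtendable δp δe δb f σ n := by
  obtain ⟨σ', m, hnm, hagree, hprefix, hbad⟩ := h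
  refine ⟨σ', m, by lia, fun i hi => ?_, hprefix, hbad⟩
  rw [hagree i (by lia), update_succ_eq_of_le hi]

theorem PrefixF.violationExtendable_of_bad_step (h : PrefixF δp δe f σ n)
    (hstep : AdmissibleStep δp δe f σ n t) (hbad : (σ n, t) ∈ δb) :
    ViolationExtendable δp δe δb f σ n := by
  refine ⟨_, n + 1, n.le_succ, fun _ => update_succ_eq_of_le, h.update_succ hstep,
    n, n.lt_succ_self, ?_⟩
  rwa [update_succ_eq_of_le le_rfl, Function.update_self]

theorem PrefixF.violationExtendable_of_step_doomed (h : PrefixF δp δe f σ n)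
    (hstep : AdmissibleStep δp δe f σ n t) (ht : t ∈ doomedStates δp δe δb f) :
    ViolationExtendable δp δe δb f σ n :=
  .of_update_succ (ht _ _ (h.update_succ hstep) (Function.update_self ..))

theorem PrefixF.violationExtendable_of_step_envDoomed (h : PrefixF δp δe f σ n)
    (hstep : (σ n, t) ∈ δp ∪ f) (hnot_env : (σ n, t) ∉ δe)
    (ht : t ∈ envDoomedStates δp δe δb f) : ViolationExtendable δp δe δb f σ n :=
  .of_update_succ (ht _ _ (h.update_succ (.inl hstep)) (Function.update_self ..)
    (envMayMove_update_succ hnot_env))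

theorem PrefixF.violationExtendable_of_env_step (h : PrefixF δp δe f σ n)
    (hmove : EnvMayMove δp δe σ n) (henv : (σ n, t) ∈ δe)
    (hthreat : t ∈ doomedStates δp δe δb f ∨ (σ n, t) ∈ δb) :
    ViolationExtendable δp δe δb f σ n :=
  hthreat.elim (h.violationExtendable_of_step_doomed (.inr ⟨henv, hmove⟩))
    (h.violationExtendable_of_bad_step (.inr ⟨henv, hmove⟩))

theorem mem_doomedStates_of_bad_fault (hf : (s, t) ∈ f) (hbad : (s, t) ∈ δb) :
    s ∈ doomedStates δp δe δb f := by
  rintro σ n hσ rfl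
  exact hσ.violationExtendable_of_bad_step (.inl (.inr hf)) hbad

theorem doomedStates_subset_envDoomedStates :
    doomedStates δp δe δb f ⊆ envDoomedStates δp δe δb f :=
  fun _ hs σ n hσ hn _ => hs σ n hσ hn

theorem mem_envDoomedStates_of_env_step (henv : (s, t) ∈ δe)
    (hthreat : t ∈ doomedStates δp δe δb f ∨ (s, t) ∈ δb) :
    s ∈ envDoomedStates δp δe δb f := by
  rintro σ n hσ rfl hmove
  exact hσ.violationExtendable_of_env_step hmove henv hthreat

theorem mem_doomedStates_of_fault (hfe : Disjoint f δe) (hf : (s, t) ∈ f)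
    (ht : t ∈ envDoomedStates δp δe δb f) : s ∈ doomedStates δp δe δb f := by
  rintro σ n hσ rfl
  exact hσ.violationExtendable_of_step_envDoomed (.inr hf) (Set.disjoint_left.mp hfe hf) ht

/-- If the program can move from `s`, it walks into an environment-doomed state; if it cannot, the
environment may move regardless of the previous step. -/
theorem mem_doomedStates_of_env_step (hpe : Disjoint δp δe) (henv : (s, t) ∈ δe)
    (hthreat : t ∈ doomedStates δp δe δb f ∨ (s, t) ∈ δb)
    (hprog : ∀ u, (s, u) ∈ δp → u ∈ envDoomedStates δp δe δb f) :
    s ∈ doomedStates δp δe δb f := by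
  rintro σ n hσ rfl
  by_cases hmoves : ∃ u, (σ n, u) ∈ δp
  · obtain ⟨u, hu⟩ := hmoves
    exact hσ.violationExtendable_of_step_envDoomed (.inl hu) (Set.disjoint_left.mp hpe hu)
      (hprog u hu)
  · exact hσ.violationExtendable_of_env_step (fun _ _ _ => hmoves) henv hthreat

theorem closedMS_doomedStates (hpb : Disjoint δp δb) (hpr : Disjoint δp δr)
    (hpe : Disjoint δp δe) (hfe : Disjoint f δe) :
    ClosedMS δe δb δr f (doomedStates δp δe δb f) (envDoomedStates δp δe δb f) := by
  refine ⟨fun _ _ => mem_doomedStates_of_bad_fault, doomedStates_subset_envDoomedStates,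
    fun _ _ henv hbad => mem_envDoomedStates_of_env_step henv (.inr hbad),
    fun _ _ => mem_doomedStates_of_fault hfe, fun s henv hsucc => ?_,
    fun _ _ henv ht => mem_envDoomedStates_of_env_step henv (.inl ht)⟩
  obtain ⟨t, ht⟩ := henv
  obtain ⟨henv, hthreat⟩ := and_or_left.mpr ht
  refine mem_doomedStates_of_env_step hpe henv hthreat fun u hu => ?_
  exact ((hsucc u).resolve_left (Set.disjoint_left.mp hpb hu)).resolve_left
    (Set.disjoint_left.mp hpr hu)

end

theorem stmt13 (δe δb δr f δ''p : Set (α × α)) (ms₁ ms₂ : Set α)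
    (hms : LeastMS δe δb δr f ms₁ ms₂)
    (hpb : δ''p ∩ δb = ∅) (hpr : δ''p ∩ δr = ∅)
    (hpe : δ''p ∩ δe = ∅) (hfe : f ∩ δe = ∅) :
    ∀ (σ : ℕ → α) (n : ℕ), PrefixF δ''p δe f σ n → σ n ∈ ms₁ →
      ∃ (σ' : ℕ → α) (m : ℕ), n ≤ m ∧ (∀ i ≤ n, σ' i = σ i) ∧
        PrefixF δ''p δe f σ' m ∧ ∃ i < m, (σ' i, σ' (i + 1)) ∈ δb := by
  intro σ n hσ hn
  rw [← Set.disjoint_iff_inter_eq_empty] at hpb hpr hpe hfe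
  have hdoomed : ms₁ ⊆ doomedStates δ''p δe δb f :=
    (hms.2 _ _ (closedMS_doomedStates hpb hpr hpe hfe)).1
  exact hdoomed hn σ n hσ rfl
end

section
/- Let δe, δb, δr, f be relations on a type α and (ms₁, ms₂) the least pair of subsets of α closed under rules (R1)–(R6); define mt = δb ∪ δr ∪ {(s,t) | t ∈ ms₂}. Let δ''p be a relation on α with δ''p ∩ δb = ∅, δ''p ∩ δr = ∅, δ''p ∩ δe = ∅, and f ∩ δe = ∅, and let S'' ⊆ α be such that every p''[]₂δe[]f prefix whose initial state lies in S'' contains no step in δb. Then for all s, t ∈ S'' with (s,t) ∈ δ''p, we have (s,t) ∉ mt. -/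
variable {α : Type*}

/-! Any set `S''` of states from which no prefix takes a bad step is disjoint from `ms₂`. By
leastness it is enough that the states with a bad prefix form the second component of a closed
pair. Its first component consists of the states whose bad prefix remains one when an environment
step is put in front of it: such a prefix has to begin with a program or fault step whenever a
program step is available. -/

section Prefixes

variable {δp δe δb f : Set (α × α)} {s t : α} {σ : ℕ → α} {n : ℕ}

/-- The step from `s` to `t` may directly follow an environment step into `s`: the program or a
fault moves next unless the program has no transition at `s`. -/
def AllowedAfterEnv (δp f : Set (α × α)) (s t : α) : Prop :=
  (∃ u, (s, u) ∈ δp) → (s, t) ∈ δp ∪ f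

/-- Some `p[]₂δe[]f` prefix of the infinite sequence `σ` takes a step in `δb`. -/
def HasBadPrefix (δp δe δb f : Set (α × α)) (σ : ℕ → α) : Prop :=
  ∃ n, PrefixF δp δe f σ n ∧ ∃ i < n, (σ i, σ (i + 1)) ∈ δb

/-- The states from which some prefix takes a bad step: the semantic counterpart of `ms₂`. -/
def badStates (δp δe δb f : Set (α × α)) : Set α :=
  {s | ∃ σ, σ 0 = s ∧ HasBadPrefix δp δe δb f σ}

/-- The states from which some prefix takes a bad step even if they have just been entered by an
environment step: the semantic counterpart of `ms₁`. -/
def badStatesAfterEnv (δp δe δb f : Set (α × α)) : Set α :=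
  {s | ∃ σ, σ 0 = s ∧ HasBadPrefix δp δe δb f σ ∧ AllowedAfterEnv δp f s (σ 1)}

theorem PrefixF.zero (δp δe f : Set (α × α)) (σ : ℕ → α) : PrefixF δp δe f σ 0 :=
  ⟨fun _ hi => absurd hi (by lia), fun _ hi => absurd hi (by lia)⟩

theorem PrefixF.cons (hσ : PrefixF δp δe f σ n) (hstep : (s, σ 0) ∈ δp ∪ δe ∪ f)
    (hnext : 0 < n → (s, σ 0) ∈ δe → AllowedAfterEnv δp f (σ 0) (σ 1)) :
    PrefixF δp δe f (Stream'.cons s σ) (n + 1) := by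
  constructor
  · rintro (_ | i) hi
    · exact hstep
    · exact hσ.1 i (by lia)
  · rintro (_ | i) hi
    · exact hnext (by lia)
    · exact hσ.2 i (by lia)

theorem HasBadPrefix.cons (hσ : HasBadPrefix δp δe δb f σ) (hstep : (s, σ 0) ∈ δp ∪ δe ∪ f)
    (hnext : (s, σ 0) ∈ δe → AllowedAfterEnv δp f (σ 0) (σ 1)) :
    HasBadPrefix δp δe δb f (Stream'.cons s σ) := by
  obtain ⟨n, hprefix, i, hi, hbad⟩ := hσ
  exact ⟨n + 1, hprefix.cons hstep fun _ => hnext, i + 1, by lia, hbad⟩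

theorem hasBadPrefix_cons_of_bad (hstep : (s, σ 0) ∈ δp ∪ δe ∪ f) (hbad : (s, σ 0) ∈ δb) :
    HasBadPrefix δp δe δb f (Stream'.cons s σ) :=
  ⟨1, (PrefixF.zero δp δe f σ).cons hstep fun h => absurd h (lt_irrefl 0), 0, one_pos, hbad⟩

theorem badStatesAfterEnv_subset_badStates :
    badStatesAfterEnv δp δe δb f ⊆ badStates δp δe δb f :=
  fun _ ⟨σ, hσ₀, hσ, _⟩ => ⟨σ, hσ₀, hσ⟩

theorem mem_badStates_of_bad (hstep : (s, t) ∈ δp ∪ δe ∪ f) (hbad : (s, t) ∈ δb) :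
    s ∈ badStates δp δe δb f :=
  ⟨Stream'.cons s fun _ => t, rfl, hasBadPrefix_cons_of_bad hstep hbad⟩

theorem mem_badStatesAfterEnv_of_bad (hstep : (s, t) ∈ δp ∪ f) (hbad : (s, t) ∈ δb) :
    s ∈ badStatesAfterEnv δp δe δb f :=
  ⟨Stream'.cons s fun _ => t, rfl,
    hasBadPrefix_cons_of_bad (hstep.imp_left Or.inl) hbad, fun _ => hstep⟩

theorem mem_badStates_of_env (hstep : (s, t) ∈ δe) (ht : t ∈ badStatesAfterEnv δp δe δb f) :
    s ∈ badStates δp δe δb f := by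
  obtain ⟨σ, rfl, hσ, hnext⟩ := ht
  exact ⟨Stream'.cons s σ, rfl, hσ.cons (.inl (.inr hstep)) fun _ => hnext⟩

theorem mem_badStatesAfterEnv_of_step (hstep : (s, t) ∈ δp ∪ f) (henv : (s, t) ∉ δe)
    (ht : t ∈ badStates δp δe δb f) : s ∈ badStatesAfterEnv δp δe δb f := by
  obtain ⟨σ, rfl, hσ⟩ := ht
  exact ⟨Stream'.cons s σ, rfl,
    hσ.cons (hstep.imp_left Or.inl) fun h => absurd h henv, fun _ => hstep⟩

theorem mem_badStatesAfterEnv_of_forall_notMem (hs : s ∈ badStates δp δe δb f)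
    (hstuck : ∀ u, (s, u) ∉ δp) : s ∈ badStatesAfterEnv δp δe δb f := by
  obtain ⟨σ, hσ₀, hσ⟩ := hs
  exact ⟨σ, hσ₀, hσ, fun ⟨u, hu⟩ => absurd hu (hstuck u)⟩

end Prefixes

section LeastPair

variable {δp δe δb δr f : Set (α × α)} {ms₁ ms₂ S : Set α}

theorem closedMS_badStates (hpr : Disjoint δp δr) (hpe : Disjoint δp δe) (hfe : Disjoint f δe) :
    ClosedMS δe δb δr f (badStatesAfterEnv δp δe δb f) (badStates δp δe δb f) := by
  refine ⟨fun s t hf hb => mem_badStatesAfterEnv_of_bad (.inr hf) hb,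
    badStatesAfterEnv_subset_badStates,
    fun s t he hb => mem_badStates_of_bad (.inl (.inr he)) hb,
    fun s t hf ht => mem_badStatesAfterEnv_of_step (.inr hf) (hfe.notMem_of_mem_left hf) ht,
    ?_, fun s t he ht => mem_badStates_of_env he ht⟩
  rintro s ⟨t, henv⟩ hall
  by_cases hprog : ∃ u, (s, u) ∈ δp
  · obtain ⟨u, hu⟩ := hprog
    rcases hall u with hbad | hrestricted | hu_bad
    · exact mem_badStatesAfterEnv_of_bad (.inl hu) hbad
    · exact absurd hrestricted (hpr.notMem_of_mem_left hu)
    · exact mem_badStatesAfterEnv_of_step (.inl hu) (hpe.notMem_of_mem_left hu) hu_bad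
  · have hs : s ∈ badStates δp δe δb f := by
      rcases henv with ⟨he, ht⟩ | ⟨he, hbad⟩
      · exact mem_badStates_of_env he ht
      · exact mem_badStates_of_bad (.inl (.inr he)) hbad
    exact mem_badStatesAfterEnv_of_forall_notMem hs (not_exists.mp hprog)

theorem LeastMS.subset_badStates (hms : LeastMS δe δb δr f ms₁ ms₂) (hpr : Disjoint δp δr)
    (hpe : Disjoint δp δe) (hfe : Disjoint f δe) : ms₂ ⊆ badStates δp δe δb f :=
  (hms.2 _ _ (closedMS_badStates hpr hpe hfe)).2

theorem disjoint_badStates_of_safe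
    (hsafe : ∀ (σ : ℕ → α) (n : ℕ), PrefixF δp δe f σ n → σ 0 ∈ S →
      ∀ i < n, (σ i, σ (i + 1)) ∉ δb) :
    Disjoint S (badStates δp δe δb f) := by
  rw [Set.disjoint_left]
  rintro _ hS ⟨σ, rfl, n, hprefix, i, hi, hbad⟩
  exact hsafe σ n hprefix hS i hi hbad

end LeastPair

theorem stmt15_general (δe δb δr f δ''p : Set (α × α)) (ms₁ ms₂ : Set α)
    (hms : LeastMS δe δb δr f ms₁ ms₂)
    (hpr : δ''p ∩ δr = ∅) (hpe : δ''p ∩ δe = ∅) (hfe : f ∩ δe = ∅)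
    (S'' : Set α)
    (hSafe : ∀ (σ : ℕ → α) (n : ℕ), PrefixF δ''p δe f σ n → σ 0 ∈ S'' →
      ∀ i < n, (σ i, σ (i + 1)) ∉ δb) :
    ∀ s t, s ∈ S'' → t ∈ S'' → (s, t) ∈ δ''p →
      (s, t) ∉ δb ∪ δr ∪ {p : α × α | p.2 ∈ ms₂} := by
  rw [← Set.disjoint_iff_inter_eq_empty] at hpr hpe hfe
  have hS : Disjoint S'' (badStates δ''p δe δb f) := disjoint_badStates_of_safe hSafe
  rintro s t hs ht hp ((hbad | hrestricted) | hmem)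
  · exact hS.notMem_of_mem_left hs (mem_badStates_of_bad (.inl (.inl hp)) hbad)
  · exact hpr.notMem_of_mem_left hp hrestricted
  · exact hS.notMem_of_mem_left ht (hms.subset_badStates hpr hpe hfe hmem)

theorem stmt15 (δe δb δr f δ''p : Set (α × α)) (ms₁ ms₂ : Set α)
    (hms : LeastMS δe δb δr f ms₁ ms₂)
    (hpb : δ''p ∩ δb = ∅) (hpr : δ''p ∩ δr = ∅)
    (hpe : δ''p ∩ δe = ∅) (hfe : f ∩ δe = ∅)
    (S'' : Set α)
    (hSafe : ∀ (σ : ℕ → α) (n : ℕ), PrefixF δ''p δe f σ n → σ 0 ∈ S'' →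
      ∀ i < n, (σ i, σ (i + 1)) ∉ δb) :
    ∀ s t, s ∈ S'' → t ∈ S'' → (s, t) ∈ δ''p →
      (s, t) ∉ δb ∪ δr ∪ {p : α × α | p.2 ∈ ms₂} := by
  exact stmt15_general δe δb δr f δ''p ms₁ ms₂ hms hpr hpe hfe S'' hSafe
end
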